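/- There exists a 45×45 matrix with all entries equal to 1 or -1 whose determinant equals 2^44 · 11^21 · 83. Consequently md(45) ≥ 2^44 · 11^21 · 83. -/

import Mathlib

/-- `md n` is the maximal determinant of an `n × n` matrix all of whose
entries are `1` or `-1`. -/
noncomputable def md (n : ℕ) : ℤ :=
  sSup {d : ℤ | ∃ M : Matrix (Fin n) (Fin n) ℤ,
    (∀ i j, M i j = 1 ∨ M i j = -1) ∧ M.det = d}

/-!
The rows of the witness fall into three classes, of sizes `31`, `10` and `4`, such that the inner
product of two distinct rows depends only on their classes. Its Gram matrix is therefore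
`44 • 1` plus a matrix which is constant on the blocks of this partition, and the
Weinstein–Aronszajn identity turns the `45 × 45` Gram determinant into a `3 × 3` one. This gives
the square of the determinant; negating one row of the witness corrects the sign if necessary.
-/

open Matrix
open scoped Nat

/-- A matrix all of whose entries are `1` or `-1`. -/
def IsSignMatrix {m n R : Type*} [One R] [Neg R] (M : Matrix m n R) : Prop :=
  ∀ i j, M i j = 1 ∨ M i j = -1

namespace IsSignMatrix

theorem updateRow_neg {m n R : Type*} [DecidableEq m] [One R] [InvolutiveNeg R]
    {M : Matrix m n R} (hM : IsSignMatrix M) (k : m) : IsSignMatrix (M.updateRow k (-M k)) := by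
  intro i j
  obtain rfl | hik := eq_or_ne i k
  · simpa [neg_eq_iff_eq_neg, or_comm] using hM i j
  · simpa [hik] using hM i j

variable {n R : Type*} [Fintype n] [DecidableEq n] [CommRing R] [LinearOrder R]
  {M : Matrix n n R}

theorem abs_det_le_factorial [IsStrictOrderedRing R] (hM : IsSignMatrix M) :
    |M.det| ≤ (Fintype.card n)! := by
  have abs_entry_le (i j : n) : AbsoluteValue.abs (M i j) ≤ 1 := by
    obtain h | h := hM i j <;> simp [h]
  simpa using det_le abs_entry_le

theorem exists_det_eq_abs [Nonempty n] (hM : IsSignMatrix M) :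
    ∃ N : Matrix n n R, IsSignMatrix N ∧ N.det = |M.det| := by
  obtain h | h := abs_choice M.det
  · exact ⟨M, hM, h.symm⟩
  · let k := Classical.arbitrary n
    refine ⟨M.updateRow k (-M k), hM.updateRow_neg k, ?_⟩
    rw [h, ← neg_one_smul R (M k), det_updateRow_smul, updateRow_eq_self, neg_one_mul]

theorem det_le_md {n : ℕ} {M : Matrix (Fin n) (Fin n) ℤ} (hM : IsSignMatrix M) :
    M.det ≤ md n := by
  refine le_csSup ⟨(Fintype.card (Fin n))!, ?_⟩ ⟨M, hM, rfl⟩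
  rintro _ ⟨N, hN, rfl⟩
  exact (le_abs_self _).trans (abs_det_le_factorial hN)

end IsSignMatrix

section GramDeterminant

variable {m n R : Type*} [Fintype m] [Fintype n] [DecidableEq m] [DecidableEq n] [CommRing R]

theorem det_smul_one_add_mul_comm_of_le (a : R) (A : Matrix m n R) (B : Matrix n m R)
    (hle : Fintype.card n ≤ Fintype.card m) :
    (a • 1 + A * B).det = a ^ (Fintype.card m - Fintype.card n) * (a • 1 + B * A).det := by
  simpa [eval_charpoly, ← smul_one_eq_diagonal] using
    congrArg (Polynomial.eval a) (charpoly_mul_comm_of_le (-A) B hle)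

theorem det_smul_one_add_submatrix (a : R) (C : Matrix n n R) (p : m → n)
    (hle : Fintype.card n ≤ Fintype.card m) :
    (a • 1 + C.submatrix p p).det = a ^ (Fintype.card m - Fintype.card n) *
      (a • 1 + diagonal (fun c ↦ (Finset.card {i | p i = c} : R)) * C).det := by
  let E : Matrix n m R := of fun c i ↦ if p i = c then 1 else 0
  have submatrix_eq : C.submatrix p p = C.submatrix p id * E := by
    ext i j
    simp [E, mul_apply]
  have mul_submatrix_eq : E * C.submatrix p id =
      diagonal (fun c ↦ (Finset.card {i | p i = c} : R)) * C := by
    ext c d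
    have sum_fiber : ∑ i with p i = c, C (p i) d = ∑ i with p i = c, C c d :=
      Finset.sum_congr rfl fun i hi ↦ by rw [(Finset.mem_filter.mp hi).2]
    simpa [E, mul_apply (M := E), ← Finset.sum_filter] using sum_fiber
  rw [submatrix_eq, det_smul_one_add_mul_comm_of_le a _ _ hle, mul_submatrix_eq]

end GramDeterminant

namespace signMatrix45

/-- The code of `signMatrix45`, which is invariant under a permutation of order three of its rows
and of its columns: there is one number for each pair of a row orbit and a column orbit, and its bit
`d` tells whether the entries with row shift minus column shift equal to `d` are `1`. The number is
`0` or `7` if one of the orbits is a fixed point. -/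
def blockCode : Matrix (Fin 17) (Fin 17) ℕ :=
  !![7, 5, 7, 5, 3, 6, 3, 6, 1, 2, 2, 0, 4, 1, 7, 0, 7;
     3, 7, 2, 2, 3, 3, 6, 6, 4, 0, 4, 3, 7, 1, 0, 7, 7;
     1, 4, 4, 3, 2, 7, 5, 7, 0, 5, 2, 5, 2, 3, 7, 7, 7;
     1, 1, 5, 0, 7, 3, 7, 3, 6, 6, 1, 6, 4, 3, 0, 0, 7;
     6, 5, 1, 3, 6, 7, 2, 0, 5, 4, 1, 7, 2, 5, 7, 0, 7;
     5, 1, 5, 0, 5, 6, 4, 4, 4, 2, 7, 1, 3, 7, 7, 7, 7;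
     0, 4, 7, 3, 5, 6, 5, 2, 3, 4, 5, 3, 5, 0, 7, 7, 7;
     1, 7, 5, 4, 0, 1, 7, 4, 1, 5, 5, 5, 5, 5, 7, 0, 7;
     2, 5, 7, 3, 1, 5, 4, 1, 5, 3, 0, 4, 5, 7, 0, 7, 7;
     3, 1, 6, 5, 6, 5, 4, 2, 0, 7, 3, 3, 7, 4, 0, 0, 7;
     7, 2, 5, 3, 3, 0, 6, 6, 3, 3, 1, 7, 6, 6, 7, 7, 7;
     5, 6, 1, 7, 6, 5, 7, 2, 5, 3, 7, 2, 1, 3, 0, 7, 7;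
     1, 3, 2, 3, 6, 6, 1, 7, 7, 3, 5, 4, 7, 5, 7, 0, 7;
     5, 7, 6, 3, 7, 3, 3, 5, 5, 7, 3, 3, 5, 6, 7, 7, 0;
     0, 7, 7, 7, 7, 0, 0, 7, 0, 0, 7, 7, 0, 7, 0, 0, 7;
     7, 7, 7, 0, 0, 7, 0, 7, 7, 7, 7, 7, 0, 0, 0, 7, 7;
     7, 0, 7, 7, 0, 7, 7, 7, 7, 0, 7, 7, 7, 7, 0, 0, 0]

/-- The orbit of an index: there are `14` orbits of three consecutive indices and the fixed points
`42`, `43` and `44`. -/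
def orbit (i : Fin 45) : Fin 17 :=
  if (i : ℕ) < 42 then Fin.ofNat 17 (i / 3 : ℕ) else Fin.ofNat 17 (i - 28 : ℕ)

/-- The position of an index in its orbit; the value at a fixed point is irrelevant. -/
def shift (i : Fin 45) : Fin 3 := Fin.ofNat 3 i

/-- A `45 × 45` sign matrix whose determinant has absolute value `2 ^ 44 * 11 ^ 21 * 83`. -/
def _root_.signMatrix45 : Matrix (Fin 45) (Fin 45) ℤ :=
  of fun i j ↦
    if (blockCode (orbit i) (orbit j)).testBit (shift i - shift j : Fin 3) then 1 else -1

/-- The partition of the rows of `signMatrix45` into classes of sizes `31`, `10` and `4`. -/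
def rowClass (i : Fin 45) : Fin 3 :=
  ![0, 0, 0, 0, 0, 0, 0, 0, 0, 0, 1, 1, 1, 2, 0, 1, 2] (orbit i)

/-- The inner products of distinct rows of `signMatrix45`, as a function of their classes. -/
def classGram : Matrix (Fin 3) (Fin 3) ℤ :=
  !![1, 1, 1;
     1, 1, 5;
     1, 5, 1]

theorem isSignMatrix : IsSignMatrix signMatrix45 := fun _ _ ↦ ite_eq_or_eq ..

theorem mul_transpose_self :
    signMatrix45 * signMatrix45ᵀ = (44 : ℤ) • 1 + classGram.submatrix rowClass rowClass := by
  decide +kernel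

theorem diagonal_card_rowClass :
    diagonal (fun c ↦ (Finset.card {i | rowClass i = c} : ℤ)) = diagonal ![31, 10, 4] := by
  decide +kernel

theorem det_sq : signMatrix45.det ^ 2 = (2 ^ 44 * 11 ^ 21 * 83) ^ 2 := by
  calc
    signMatrix45.det ^ 2 = (signMatrix45 * signMatrix45ᵀ).det := by
      rw [det_mul, det_transpose, sq]
    _ = 44 ^ 42 * ((44 : ℤ) • 1 + diagonal ![31, 10, 4] * classGram).det := by
      rw [mul_transpose_self, det_smul_one_add_submatrix _ _ _ (by simp),
        diagonal_card_rowClass]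
      simp
    _ = 44 ^ 42 * (2 ^ 2 * 83) ^ 2 := by
      have smul_one_add_eq : (44 : ℤ) • 1 + diagonal ![31, 10, 4] * classGram =
          !![75, 31, 31; 10, 54, 50; 4, 20, 48] := by decide
      rw [smul_one_add_eq, det_fin_three]
      simp
    _ = (2 ^ 44 * 11 ^ 21 * 83) ^ 2 := by norm_num

theorem abs_det : |signMatrix45.det| = 2 ^ 44 * 11 ^ 21 * 83 := by
  rw [← abs_of_pos (show (0 : ℤ) < 2 ^ 44 * 11 ^ 21 * 83 by norm_num)]
  exact sq_eq_sq_iff_abs_eq_abs _ _ |>.mp det_sq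

end signMatrix45

theorem stmt_9 :
    (∃ M : Matrix (Fin 45) (Fin 45) ℤ,
      (∀ i j, M i j = 1 ∨ M i j = -1) ∧ M.det = 2^44 * 11^21 * 83) ∧
    (2^44 * 11^21 * 83 : ℤ) ≤ md 45 := by
  obtain ⟨M, hM, hdet⟩ := signMatrix45.isSignMatrix.exists_det_eq_abs
  rw [signMatrix45.abs_det] at hdet
  exact ⟨⟨M, hM, hdet⟩, hdet ▸ hM.det_le_md⟩
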